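/- Assume H is 2q-observable and 2q ≤ m, and fix y ∈ ℝ^m. If the function φ ↦ rad(X(y,φ)) is discontinuous at a point φ₀ ∈ ℝ, then there exists an index set I ⊆ {1,…,m} with |I| = m − q such that res(I) = φ₀. -/

import Mathlib

/-- The inconsistency `d_x(y)`. -/
noncomputable def dinc (m n q : ℕ) (H : Matrix (Fin m) (Fin n) ℝ) (W : Fin m → ℝ)
    (x : EuclideanSpace ℝ (Fin n)) (y : Fin m → ℝ) : ℝ :=
  sInf { v : ℝ | ∃ a : Fin m → ℝ, (Function.support a).ncard ≤ q ∧
    v = (1 / 2 : ℝ) * ∑ i, (y i - (∑ j, H i j * x j) + a i) ^ 2 / W i }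

/-- The restricted inconsistency `d_x(y, I)`. -/
noncomputable def dres (m n : ℕ) (H : Matrix (Fin m) (Fin n) ℝ) (W : Fin m → ℝ)
    (x : EuclideanSpace ℝ (Fin n)) (y : Fin m → ℝ) (I : Finset (Fin m)) : ℝ :=
  (1 / 2 : ℝ) * ∑ i ∈ I, (y i - (∑ j, H i j * x j)) ^ 2 / W i

/-- The residue `res(I) := min_x d_x(y, I)`. -/
noncomputable def res (m n : ℕ) (H : Matrix (Fin m) (Fin n) ℝ) (W : Fin m → ℝ)
    (y : Fin m → ℝ) (I : Finset (Fin m)) : ℝ :=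
  ⨅ x : EuclideanSpace ℝ (Fin n), dres m n H W x y I

/-- The sublevel set `X(y,φ) := {x : d_x(y) ≤ φ}`. -/
noncomputable def sublevel (m n q : ℕ) (H : Matrix (Fin m) (Fin n) ℝ) (W : Fin m → ℝ)
    (y : Fin m → ℝ) (φ : ℝ) : Set (EuclideanSpace ℝ (Fin n)) :=
  { x | dinc m n q H W x y ≤ φ }

/-- The radius `rad(A) := inf_c sup_{x ∈ A} ‖x − c‖₂` (with `rad ∅ = 0`). -/
noncomputable def rad (n : ℕ) (A : Set (EuclideanSpace ℝ (Fin n))) : ℝ :=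
  ⨅ c : EuclideanSpace ℝ (Fin n), ⨆ x ∈ A, dist x c

/-- `H` is `2q`-observable. -/
def TwoQObservable (m n q : ℕ) (H : Matrix (Fin m) (Fin n) ℝ) : Prop :=
  2 * q ≤ m ∧ ∀ I : Finset (Fin m), I.card = m - 2 * q →
    (Matrix.of fun (i : { i // i ∈ I }) (j : Fin n) => H i.1 j).rank = n

/-!
The sublevel set `X(y, φ)` is the union of the finitely many sets `{x | d_x(y, I) ≤ φ}` with
`|I| = m - q`, because an optimal sparse correction cancels the residuals outside some such `I`.
Each `d_·(y, I)` is convex with bounded sublevel sets. Such a sublevel set moves continuously in the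
Hausdorff distance except at the minimum `res(I)`: below the minimum it is empty, and above it every
point can be pushed a short way towards a strictly better point to enter a slightly smaller sublevel
set. The radius is 1-Lipschitz for the Hausdorff distance, so it can only jump at a residue.
-/

open Set Filter Topology Metric Bornology

section ConvexSublevel

variable {E : Type*} [SeminormedAddCommGroup E] [NormedSpace ℝ E]

theorem hausdorffEDist_setOf_le_of_convexOn {f : E → ℝ} (hf : ConvexOn ℝ univ f) {z : E}
    {a b D : ℝ} (hza : f z ≤ a) (hzb : f z < b) (hab : a ≤ b)
    (hD : {x | f x ≤ b} ⊆ closedBall z D) :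
    hausdorffEDist {x | f x ≤ a} {x | f x ≤ b} ≤ ENNReal.ofReal ((b - a) / (b - f z) * D) := by
  have hpos : 0 < b - f z := sub_pos.2 hzb
  set t : ℝ := (b - a) / (b - f z) with ht
  have ht0 : 0 ≤ t := div_nonneg (sub_nonneg.2 hab) hpos.le
  have ht1 : t ≤ 1 := (div_le_one hpos).2 (by linarith)
  refine hausdorffEDist_le_of_mem_edist (fun x hx => ⟨x, le_trans hx hab, by simp⟩) fun x hx => ?_
  refine ⟨AffineMap.lineMap x z t, ?_, ?_⟩
  · calc f (AffineMap.lineMap x z t) = f ((1 - t) • x + t • z) := by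
          rw [AffineMap.lineMap_apply_module]
      _ ≤ (1 - t) * f x + t * f z :=
          hf.2 (mem_univ x) (mem_univ z) (sub_nonneg.2 ht1) ht0 (sub_add_cancel 1 t)
      _ ≤ (1 - t) * b + t * f z := by
          gcongr
          exact hx
      _ = b - t * (b - f z) := by ring
      _ = a := by rw [ht, div_mul_cancel₀ _ hpos.ne', sub_sub_cancel]
  · rw [edist_dist, dist_left_lineMap, Real.norm_of_nonneg ht0]
    gcongr
    exact hD hx

theorem tendsto_hausdorffEDist_setOf_le_of_lt {f : E → ℝ} (hf : ConvexOn ℝ univ f) {φ₀ φ₁ : ℝ}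
    (hφ : φ₀ < φ₁) (hbdd : IsBounded {x | f x ≤ φ₁}) {z : E} (hz : f z < φ₀) :
    Tendsto (fun φ => hausdorffEDist {x | f x ≤ φ} {x | f x ≤ φ₀}) (𝓝 φ₀) (𝓝 0) := by
  obtain ⟨D, hD⟩ := hbdd.subset_closedBall z
  have hball {φ : ℝ} (h : φ ≤ φ₁) : {x | f x ≤ φ} ⊆ closedBall z D :=
    fun x hx => hD (le_trans hx h)
  have hD0 : 0 ≤ D := by simpa using hball hφ.le hz.le
  have hlim : Tendsto (fun φ => ENNReal.ofReal (|φ - φ₀| / (φ₀ - f z) * D)) (𝓝 φ₀) (𝓝 0) := by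
    have hcont : Continuous fun φ => |φ - φ₀| / (φ₀ - f z) * D := by fun_prop
    simpa [Function.comp_def] using (ENNReal.continuous_ofReal.comp hcont).tendsto φ₀
  refine tendsto_of_tendsto_of_tendsto_of_le_of_le' tendsto_const_nhds hlim
    (Eventually.of_forall fun _ => zero_le) ?_
  filter_upwards [Ioo_mem_nhds hz hφ] with φ ⟨hzφ, hφ₁⟩
  rcases le_total φ φ₀ with h | h
  · rw [abs_sub_comm, abs_of_nonneg (sub_nonneg.2 h)]
    exact hausdorffEDist_setOf_le_of_convexOn hf hzφ.le hz h (hball hφ.le)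
  · rw [abs_of_nonneg (sub_nonneg.2 h), hausdorffEDist_comm]
    refine (hausdorffEDist_setOf_le_of_convexOn hf hz.le hzφ h (hball hφ₁.le)).trans ?_
    gcongr

theorem tendsto_hausdorffEDist_setOf_le_of_ne_iInf {f : E → ℝ} (hf : ConvexOn ℝ univ f)
    {φ₀ φ₁ : ℝ} (hφ : φ₀ < φ₁) (hbdd : IsBounded {x | f x ≤ φ₁}) (hne : (⨅ x, f x) ≠ φ₀) :
    Tendsto (fun φ => hausdorffEDist {x | f x ≤ φ} {x | f x ≤ φ₀}) (𝓝 φ₀) (𝓝 0) := by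
  by_cases hz : ∃ z, f z < φ₀
  · obtain ⟨z, hz⟩ := hz
    exact tendsto_hausdorffEDist_setOf_le_of_lt hf hφ hbdd hz
  · have hle : ∀ x, φ₀ ≤ f x := by simpa using hz
    have hlt : φ₀ < ⨅ x, f x := (le_ciInf hle).lt_of_ne hne.symm
    have hempty {φ : ℝ} (h : φ < ⨅ x, f x) : {x | f x ≤ φ} = ∅ :=
      eq_empty_of_forall_notMem fun x hx =>
        (h.trans_le (ciInf_le ⟨φ₀, forall_mem_range.2 hle⟩ x)).not_ge hx
    refine tendsto_const_nhds.congr' ?_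
    filter_upwards [Iio_mem_nhds hlt] with φ hφlt
    rw [hempty hφlt, hempty hlt, hausdorffEDist_self]

end ConvexSublevel

theorem tendsto_hausdorffEDist_iUnion {ι X α : Type*} [Finite ι] [PseudoEMetricSpace α]
    {l : Filter X} {s : ι → X → Set α} {t : ι → Set α}
    (h : ∀ i, Tendsto (fun x => hausdorffEDist (s i x) (t i)) l (𝓝 0)) :
    Tendsto (fun x => hausdorffEDist (⋃ i, s i x) (⋃ i, t i)) l (𝓝 0) := by
  simp only [ENNReal.tendsto_nhds_zero] at h ⊢
  intro ε hε
  filter_upwards [eventually_all.2 fun i => h i ε hε] with x hx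
  exact hausdorffEDist_iUnion_le.trans (iSup_le hx)

section Radius

variable {α : Type*} [PseudoMetricSpace α]

theorem iSup_mem_dist_nonneg (s : Set α) (c : α) : 0 ≤ ⨆ x ∈ s, dist x c :=
  Real.iSup_nonneg fun _ => Real.iSup_nonneg fun _ => dist_nonneg

theorem dist_le_iSup_mem_dist {s : Set α} (hs : IsBounded s) (c : α) {x : α} (hx : x ∈ s) :
    dist x c ≤ ⨆ x ∈ s, dist x c := by
  obtain ⟨D, hD⟩ := hs.subset_closedBall c
  have hbdd : BddAbove (range fun x => ⨆ _ : x ∈ s, dist x c) := by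
    refine ⟨max D 0, forall_mem_range.2 fun w => ?_⟩
    exact Real.iSup_le (fun hw => (hD hw).trans (le_max_left D 0)) (le_max_right D 0)
  exact le_ciSup_of_le hbdd x (by simp [hx])

theorem iSup_mem_dist_le_add_hausdorffDist {s t : Set α} (ht : IsBounded t)
    (hfin : hausdorffEDist s t ≠ ⊤) (c : α) :
    ⨆ x ∈ s, dist x c ≤ (⨆ x ∈ t, dist x c) + hausdorffDist s t := by
  have hrhs : 0 ≤ (⨆ x ∈ t, dist x c) + hausdorffDist s t :=
    add_nonneg (iSup_mem_dist_nonneg t c) hausdorffDist_nonneg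
  refine Real.iSup_le (fun x => Real.iSup_le (fun hx => ?_) hrhs) hrhs
  refine le_of_forall_pos_lt_add fun ε hε => ?_
  obtain ⟨x', hx', hdist⟩ := exists_dist_lt_of_hausdorffDist_lt hx (lt_add_of_pos_right _ hε) hfin
  linarith [dist_triangle x x' c, dist_le_iSup_mem_dist ht c hx']

variable {n : ℕ} {A B : Set (EuclideanSpace ℝ (Fin n))}

theorem rad_le_add_hausdorffDist (hB : IsBounded B) (hfin : hausdorffEDist A B ≠ ⊤) :
    rad n A ≤ rad n B + hausdorffDist A B := by
  rw [← sub_le_iff_le_add]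
  refine le_ciInf fun c => sub_le_iff_le_add.2 ?_
  refine (ciInf_le ⟨0, forall_mem_range.2 (iSup_mem_dist_nonneg A)⟩ c).trans ?_
  exact iSup_mem_dist_le_add_hausdorffDist hB hfin c

theorem edist_rad_le_hausdorffEDist (hA : IsBounded A) (hB : IsBounded B) :
    edist (rad n A) (rad n B) ≤ hausdorffEDist A B := by
  by_cases hfin : hausdorffEDist A B = ⊤
  · exact hfin ▸ le_top
  have hAB := rad_le_add_hausdorffDist hB hfin
  have hBA := rad_le_add_hausdorffDist hA (hausdorffEDist_comm (s := A) ▸ hfin)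
  rw [hausdorffDist_comm] at hBA
  have hdist : dist (rad n A) (rad n B) ≤ hausdorffDist A B :=
    abs_sub_le_iff.2 ⟨by linarith, by linarith⟩
  rw [edist_dist]
  exact (ENNReal.ofReal_le_iff_le_toReal hfin).2 hdist

theorem continuousAt_rad_of_tendsto_hausdorffEDist {X : Type*} [TopologicalSpace X]
    {S : X → Set (EuclideanSpace ℝ (Fin n))} {x₀ : X} (hS : ∀ x, IsBounded (S x))
    (h : Tendsto (fun x => hausdorffEDist (S x) (S x₀)) (𝓝 x₀) (𝓝 0)) :
    ContinuousAt (fun x => rad n (S x)) x₀ :=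
  tendsto_iff_edist_tendsto_0.2 <| tendsto_of_tendsto_of_tendsto_of_le_of_le tendsto_const_nhds h
    (fun _ => zero_le) fun x => edist_rad_le_hausdorffEDist (hS x) (hS x₀)

end Radius

theorem mulVec_injective_of_rank_eq_card {ι κ K : Type*} [Field K] [Fintype κ]
    {A : Matrix ι κ K} (hA : A.rank = Fintype.card κ) : Function.Injective A.mulVec := by
  rw [Matrix.mulVec_injective_iff, linearIndependent_iff_card_eq_finrank_span, ← hA]
  exact A.rank_eq_finrank_span_cols

theorem exists_card_eq_forall_eq_zero {ι M : Type*} [Fintype ι] [Zero M] {q : ℕ} {a : ι → M}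
    (ha : (Function.support a).ncard ≤ q) :
    ∃ I : Finset ι, I.card = Fintype.card ι - q ∧ ∀ i ∈ I, a i = 0 := by
  classical
  have hcard : Fintype.card ι - q ≤ (Function.support a).toFinsetᶜ.card := by
    rw [Finset.card_compl, ← ncard_eq_toFinset_card']
    lia
  obtain ⟨I, hsub, hI⟩ := Finset.exists_subset_card_eq hcard
  exact ⟨I, hI, fun i hi => by simpa using hsub hi⟩

section Inconsistency

variable {m n q : ℕ} {H : Matrix (Fin m) (Fin n) ℝ} {W : Fin m → ℝ}

theorem convexOn_dres (hW : ∀ i, 0 < W i) (y : Fin m → ℝ) (I : Finset (Fin m)) :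
    ConvexOn ℝ univ fun x => dres m n H W x y I := by
  have hterm (i : Fin m) : ConvexOn ℝ univ fun x : EuclideanSpace ℝ (Fin n) =>
      (W i)⁻¹ • (y i - ∑ j, H i j * x j) ^ 2 := by
    let residual : EuclideanSpace ℝ (Fin n) →ᵃ[ℝ] ℝ :=
      AffineMap.const ℝ _ (y i) - (∑ j, H i j • EuclideanSpace.projₗ j).toAffineMap
    have hsq : ConvexOn ℝ univ fun r : ℝ => r ^ 2 := even_two.convexOn_pow
    simpa [residual, Function.comp_def] using
      (hsq.comp_affineMap residual).smul (inv_nonneg.2 (hW i).le)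
  have hsum : ConvexOn ℝ univ (∑ i ∈ I, fun x : EuclideanSpace ℝ (Fin n) =>
      (W i)⁻¹ • (y i - ∑ j, H i j * x j) ^ 2) :=
    Finset.sum_induction _ (ConvexOn ℝ univ) (fun _ _ => ConvexOn.add)
      (convexOn_const 0 convex_univ) fun i _ => hterm i
  refine (hsum.smul (c := (1 / 2 : ℝ)) (by norm_num)).congr fun x _ => ?_
  simp [dres, div_eq_inv_mul]

theorem sq_residual_le_of_dres_le (hW : ∀ i, 0 < W i) {x : EuclideanSpace ℝ (Fin n)}
    {y : Fin m → ℝ} {I : Finset (Fin m)} {φ : ℝ} (hx : dres m n H W x y I ≤ φ) {i : Fin m}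
    (hi : i ∈ I) : (y i - ∑ j, H i j * x j) ^ 2 ≤ 2 * φ * W i := by
  have hterm : (y i - ∑ j, H i j * x j) ^ 2 / W i ≤
      ∑ i ∈ I, (y i - ∑ j, H i j * x j) ^ 2 / W i :=
    Finset.single_le_sum (f := fun i => (y i - ∑ j, H i j * x j) ^ 2 / W i)
      (fun i _ => div_nonneg (sq_nonneg _) (hW i).le) hi
  rw [dres] at hx
  exact (div_le_iff₀ (hW i)).1 (by linarith)

theorem isBounded_setOf_dres_le (hW : ∀ i, 0 < W i) (y : Fin m → ℝ) {I : Finset (Fin m)}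
    (hI : (H.submatrix (Subtype.val : I → Fin m) id).rank = n) (φ : ℝ) :
    IsBounded {x | dres m n H W x y I ≤ φ} := by
  let L : EuclideanSpace ℝ (Fin n) →ₗ[ℝ] (I → ℝ) :=
    (H.submatrix Subtype.val id).mulVecLin ∘ₗ (WithLp.linearEquiv 2 ℝ (Fin n → ℝ)).toLinearMap
  have hL : Function.Injective L :=
    (mulVec_injective_of_rank_eq_card (hI.trans (Fintype.card_fin n).symm)).comp
      (LinearEquiv.injective _)
  obtain ⟨K, -, hK⟩ := L.exists_antilipschitzWith (LinearMap.ker_eq_bot.2 hL)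
  have hbox : IsBounded (univ.pi fun i : I => closedBall (y i) √(2 * φ * W i)) :=
    IsBounded.pi fun _ => isBounded_closedBall
  refine (hK.isBounded_preimage hbox).subset fun x hx i _ => ?_
  have hLx : L x i = ∑ j, H i j * x j := rfl
  rw [mem_closedBall', Real.dist_eq, hLx]
  exact Real.abs_le_sqrt (sq_residual_le_of_dres_le hW hx i.2)

theorem dres_le_of_forall_eq_zero (hW : ∀ i, 0 < W i) (x : EuclideanSpace ℝ (Fin n))
    (y : Fin m → ℝ) {I : Finset (Fin m)} {a : Fin m → ℝ} (ha : ∀ i ∈ I, a i = 0) :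
    dres m n H W x y I ≤ (1 / 2 : ℝ) * ∑ i, (y i - (∑ j, H i j * x j) + a i) ^ 2 / W i := by
  refine mul_le_mul_of_nonneg_left ?_ one_half_pos.le
  calc ∑ i ∈ I, (y i - ∑ j, H i j * x j) ^ 2 / W i
      = ∑ i ∈ I, (y i - (∑ j, H i j * x j) + a i) ^ 2 / W i :=
        Finset.sum_congr rfl fun i hi => by rw [ha i hi, add_zero]
    _ ≤ ∑ i, (y i - (∑ j, H i j * x j) + a i) ^ 2 / W i :=
        Finset.sum_le_univ_sum_of_nonneg fun i => div_nonneg (sq_nonneg _) (hW i).le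

theorem exists_dres_le_dinc (hW : ∀ i, 0 < W i) (x : EuclideanSpace ℝ (Fin n))
    (y : Fin m → ℝ) :
    ∃ I : Finset (Fin m), I.card = m - q ∧ dres m n H W x y I ≤ dinc m n q H W x y := by
  have hne : (Finset.powersetCard (m - q) (Finset.univ : Finset (Fin m))).Nonempty :=
    Finset.powersetCard_nonempty.2 (by simp)
  obtain ⟨I, hI, hmin⟩ := Finset.exists_min_image _ (dres m n H W x y) hne
  refine ⟨I, (Finset.mem_powersetCard.1 hI).2, le_csInf ⟨_, 0, by simp, rfl⟩ ?_⟩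
  rintro _ ⟨a, ha, rfl⟩
  obtain ⟨J, hJ, haJ⟩ := exists_card_eq_forall_eq_zero ha
  exact (hmin J (by simpa using hJ)).trans (dres_le_of_forall_eq_zero hW x y haJ)

theorem dinc_le_dres (hW : ∀ i, 0 < W i) (x : EuclideanSpace ℝ (Fin n)) (y : Fin m → ℝ)
    {I : Finset (Fin m)} (hI : m - q ≤ I.card) : dinc m n q H W x y ≤ dres m n H W x y I := by
  classical
  have hbdd : BddBelow {v : ℝ | ∃ a : Fin m → ℝ, (Function.support a).ncard ≤ q ∧
      v = (1 / 2 : ℝ) * ∑ i, (y i - (∑ j, H i j * x j) + a i) ^ 2 / W i} := by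
    refine ⟨0, ?_⟩
    rintro _ ⟨a, -, rfl⟩
    exact mul_nonneg one_half_pos.le
      (Finset.sum_nonneg fun i _ => div_nonneg (sq_nonneg _) (hW i).le)
  let a : Fin m → ℝ := fun i => if i ∈ I then 0 else -(y i - ∑ j, H i j * x j)
  refine csInf_le hbdd ⟨a, ?_, ?_⟩
  · have hsub : Function.support a ⊆ (Iᶜ : Finset (Fin m)) := fun i hi => by
      by_contra hiI
      simp_all [a]
    calc (Function.support a).ncard ≤ Iᶜ.card := by
          simpa only [ncard_coe_finset] using ncard_le_ncard hsub
      _ ≤ q := by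
          rw [Finset.card_compl, Fintype.card_fin]
          lia
  · rw [dres, ← Finset.sum_subset (Finset.subset_univ I) fun i _ hi => by simp [a, hi]]
    exact congrArg _ (Finset.sum_congr rfl fun i hi => by simp [a, hi])

theorem sublevel_eq_iUnion_setOf_dres_le (hW : ∀ i, 0 < W i) (y : Fin m → ℝ) (φ : ℝ) :
    sublevel m n q H W y φ =
      ⋃ I : {I : Finset (Fin m) // I.card = m - q}, {x | dres m n H W x y I ≤ φ} := by
  ext x
  rw [mem_iUnion]
  constructor
  · intro hx
    obtain ⟨I, hI, hle⟩ := exists_dres_le_dinc (q := q) (H := H) hW x y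
    exact ⟨⟨I, hI⟩, hle.trans hx⟩
  · rintro ⟨⟨I, hI⟩, hx⟩
    exact (dinc_le_dres hW x y hI.ge).trans hx

theorem rank_submatrix_of_twoQObservable (hobs : TwoQObservable m n q H) {I : Finset (Fin m)}
    (hI : I.card = m - q) : (H.submatrix (Subtype.val : I → Fin m) id).rank = n := by
  obtain ⟨J, hJI, hJ⟩ := Finset.exists_subset_card_eq (show m - 2 * q ≤ I.card by lia)
  refine le_antisymm ((Matrix.rank_le_card_width _).trans_eq (Fintype.card_fin n)) ?_
  calc n = (H.submatrix (Subtype.val : J → Fin m) id).rank := (hobs.2 J hJ).symm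
    _ ≤ (H.submatrix (Subtype.val : I → Fin m) id).rank :=
        (H.submatrix (Subtype.val : I → Fin m) id).rank_submatrix_le (inclusion hJI) id

end Inconsistency

theorem stmt_5_general {m n q : ℕ} {H : Matrix (Fin m) (Fin n) ℝ} {W : Fin m → ℝ}
    (hW : ∀ i, 0 < W i)
    (hrank : ∀ I : Finset (Fin m), I.card = m - q →
      (H.submatrix (Subtype.val : I → Fin m) id).rank = n)
    (y : Fin m → ℝ) {φ₀ : ℝ}
    (hdisc : ¬ ContinuousAt (fun φ : ℝ => rad n (sublevel m n q H W y φ)) φ₀) :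
    ∃ I : Finset (Fin m), I.card = m - q ∧ res m n H W y I = φ₀ := by
  contrapose! hdisc with hres
  have hbdd (I : {I : Finset (Fin m) // I.card = m - q}) (φ : ℝ) :
      IsBounded {x | dres m n H W x y I ≤ φ} := isBounded_setOf_dres_le hW y (hrank I I.2) φ
  simp only [sublevel_eq_iUnion_setOf_dres_le hW]
  refine continuousAt_rad_of_tendsto_hausdorffEDist
    (fun φ => isBounded_iUnion.2 fun I => hbdd I φ) ?_
  exact tendsto_hausdorffEDist_iUnion fun I => tendsto_hausdorffEDist_setOf_le_of_ne_iInf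
    (convexOn_dres hW y I) (lt_add_one φ₀) (hbdd I _) (hres I I.2)

/-- if `φ ↦ rad(X(y,φ))` is discontinuous at `φ₀`, then some index
set `I` of cardinality `m − q` has residue `res(I) = φ₀`. -/
theorem stmt_5 (m n q : ℕ) (hm : 1 ≤ m) (hn : 1 ≤ n) (hq : q ≤ m)
    (H : Matrix (Fin m) (Fin n) ℝ) (W : Fin m → ℝ) (hW : ∀ i, 0 < W i)
    (hobs : TwoQObservable m n q H) (y : Fin m → ℝ) (φ₀ : ℝ)
    (hdisc : ¬ ContinuousAt (fun φ : ℝ => rad n (sublevel m n q H W y φ)) φ₀) :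
    ∃ I : Finset (Fin m), I.card = m - q ∧ res m n H W y I = φ₀ := by
  exact stmt_5_general hW (fun _ => rank_submatrix_of_twoQObservable hobs) y hdisc
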